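/- arXiv:2008.09368 — 5 statements merged into one kernel-verified Lean document; each statement's English description precedes it below -/
import Mathlib

section
/- Let $m \geq K \geq 1$ be integers, let $g_1 \geq g_2 \geq \dots \geq g_m$ be real numbers in $[0,1]$, and let $w_1 \geq w_2 \geq \dots \geq w_K$ be real numbers in $[0,1]$. Then for every injective map $\sigma \colon \{1,\dots,K\} \to \{1,\dots,m\}$ one has $1 - \prod_{k=1}^{K}\bigl(1 - g_{\sigma(k)} w_k\bigr) \leq 1 - \prod_{k=1}^{K}\bigl(1 - g_k w_k\bigr)$; equivalently, $\prod_{k=1}^{K}\bigl(1 - g_{\sigma(k)} w_k\bigr) \geq \prod_{k=1}^{K}\bigl(1 - g_k w_k\bigr)$. In other words, the assignment placing the item with the $k$-th largest attractiveness value at the $k$-th slot maximizes the probability $1 - \prod_{k=1}^{K}(1-g_{\sigma(k)}w_k)$ that at least one slot is clicked. -/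
open Finset

/-!
For `g` and `w` decreasing, `c i k = 1 - g i * w k` is a multiplicative Monge array, so matching
rows and columns in the same order minimizes the product: give the largest row to the largest column
by exchanging two partners, then induct. This reduces the claim to increasing `σ`, for which
`k ≤ σ k` and the products compare factor by factor.
-/

/-- A multiplicative Monge array: in every `2 × 2` minor the diagonal product is at most the
antidiagonal one. This is the Monge property of optimal assignment theory with sums replaced by
products. -/
def IsMulMonge {α β R : Type*} [Preorder α] [Preorder β] [Mul R] [LE R] (c : α → β → R) : Prop :=
  ∀ ⦃i i'⦄, i ≤ i' → ∀ ⦃j j'⦄, j ≤ j' → c i j * c i' j' ≤ c i j' * c i' j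

namespace IsMulMonge

lemma comp_monotone_left {α β γ R : Type*} [Preorder α] [Preorder β] [Preorder γ] [Mul R] [LE R]
    {c : α → β → R} (hc : IsMulMonge c) {f : γ → α} (hf : Monotone f) :
    IsMulMonge fun i j ↦ c (f i) j :=
  fun _ _ hi _ _ hj ↦ hc (hf hi) hj

lemma one_sub_mul {α β R : Type*} [Preorder α] [Preorder β] [CommRing R] [PartialOrder R]
    [IsOrderedRing R] {g : α → R} {w : β → R} (hg : Antitone g) (hw : Antitone w) :
    IsMulMonge fun i j ↦ 1 - g i * w j := by
  intro i i' hi j j' hj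
  rw [← sub_nonneg]
  calc 0 ≤ (g i - g i') * (w j - w j') :=
        mul_nonneg (sub_nonneg.2 (hg hi)) (sub_nonneg.2 (hw hj))
    _ = (1 - g i * w j') * (1 - g i' * w j) - (1 - g i * w j) * (1 - g i' * w j') := by ring

section Perm

variable {α R : Type*} [LinearOrder α] [CommMonoidWithZero R] [Preorder R] [ZeroLEOneClass R]
  [PosMulMono R] {c : α → α → R} {s : Finset α} {σ : Equiv.Perm α}

lemma mul_prod_swap_le_prod_insert (hc : IsMulMonge c) (hc0 : ∀ i j, 0 ≤ c i j) {a : α}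
    (ha : ∀ i ∈ s, i < a) (hσ : {i | σ i ≠ i} ⊆ (insert a s : Finset α)) :
    c a a * ∏ i ∈ s, c (Equiv.swap a (σ a) (σ i)) i ≤ ∏ i ∈ insert a s, c (σ i) i := by
  have has : a ∉ s := fun h ↦ (ha a h).false
  rw [prod_insert has]
  obtain hfix | hmove := eq_or_ne (σ a) a
  · simp only [hfix, Equiv.swap_self, Equiv.refl_apply, le_refl]
  obtain ⟨b, hσb⟩ := σ.surjective a
  have hba : b ≠ a := fun h ↦ hmove (h ▸ hσb)
  have hb : b ∈ s := mem_of_mem_insert_of_ne (hσ fun h ↦ hba (h.symm.trans hσb)) hba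
  have hσa : σ a ∈ s := mem_of_mem_insert_of_ne (hσ (σ.injective.ne hmove)) hmove
  have hrest : ∀ i ∈ s.erase b, Equiv.swap a (σ a) (σ i) = σ i := fun i hi ↦
    Equiv.swap_apply_of_ne_of_ne
      (fun h ↦ ne_of_mem_erase hi (σ.injective (h.trans hσb.symm)))
      (fun h ↦ has (σ.injective h ▸ mem_of_mem_erase hi))
  calc c a a * ∏ i ∈ s, c (Equiv.swap a (σ a) (σ i)) i
      = (∏ i ∈ s.erase b, c (σ i) i) * (c (σ a) b * c a a) := by
        rw [← prod_erase_mul s _ hb, hσb, Equiv.swap_apply_left,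
          prod_congr rfl fun i hi ↦ by rw [hrest i hi], mul_comm, mul_assoc]
    _ ≤ (∏ i ∈ s.erase b, c (σ i) i) * (c (σ a) a * c a b) :=
        mul_le_mul_of_nonneg_left (hc (ha _ hσa).le (ha b hb).le)
          (prod_nonneg fun _ _ ↦ hc0 _ _)
    _ = c (σ a) a * ∏ i ∈ s, c (σ i) i := by
        rw [← prod_erase_mul s _ hb, hσb, mul_left_comm]

theorem prod_diag_le_prod_perm (hc : IsMulMonge c) (hc0 : ∀ i j, 0 ≤ c i j)
    (hσ : {i | σ i ≠ i} ⊆ s) : ∏ i ∈ s, c i i ≤ ∏ i ∈ s, c (σ i) i := by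
  induction s using induction_on_max generalizing σ with
  | empty => simp
  | insert a s ha ih =>
    set τ := σ.trans (Equiv.swap a (σ a))
    have hτ : {i | τ i ≠ i} ⊆ s := by
      intro i hi
      have hia : i ≠ a := by
        rintro rfl
        exact hi (Equiv.swap_apply_right _ _)
      refine mem_of_mem_insert_of_ne (hσ fun hfix ↦ hi ?_) hia
      have hiσa : i ≠ σ a := fun h ↦ hia (σ.injective (hfix.trans h))
      simp only [τ, Equiv.trans_apply, hfix, Equiv.swap_apply_of_ne_of_ne hia hiσa]
    calc ∏ i ∈ insert a s, c i i
        = c a a * ∏ i ∈ s, c i i := prod_insert fun h ↦ (ha a h).false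
      _ ≤ c a a * ∏ i ∈ s, c (τ i) i := mul_le_mul_of_nonneg_left (ih hτ) (hc0 a a)
      _ ≤ ∏ i ∈ insert a s, c (σ i) i := hc.mul_prod_swap_le_prod_insert hc0 ha hσ

end Perm

end IsMulMonge

lemma val_le_apply_of_strictMono {n : ℕ} {f : Fin n → ℕ} (hf : StrictMono f) (k : Fin n) :
    (k : ℕ) ≤ f k := by
  have hcard : #(Iio k) ≤ #(Iio (f k)) :=
    card_le_card_of_injOn f (fun i hi ↦ by simpa using hf (by simpa using hi)) hf.injective.injOn
  simpa only [Fin.card_Iio, Nat.card_Iio] using hcard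

theorem IsMulMonge.prod_castLE_le_prod_of_injective {R : Type*} [CommMonoidWithZero R]
    [Preorder R] [ZeroLEOneClass R] [PosMulMono R] {m n : ℕ} (hnm : n ≤ m)
    {c : Fin m → Fin n → R} (hc : IsMulMonge c) (hc0 : ∀ i k, 0 ≤ c i k)
    (hmono : ∀ k, Monotone fun i ↦ c i k) {σ : Fin n → Fin m} (hσ : σ.Injective) :
    ∏ k, c (Fin.castLE hnm k) k ≤ ∏ k, c (σ k) k := by
  set π := Tuple.sort σ
  have hsorted : Monotone (σ ∘ π) := Tuple.monotone_sort σ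
  have hstrict : StrictMono (σ ∘ π) := hsorted.strictMono_of_injective (hσ.comp π.injective)
  calc ∏ k, c (Fin.castLE hnm k) k
      ≤ ∏ k, c (σ (π k)) k := prod_le_prod (fun _ _ ↦ hc0 _ _) fun k _ ↦
        hmono k (Fin.le_def.2 (val_le_apply_of_strictMono (Fin.val_strictMono.comp hstrict) k))
    _ ≤ ∏ k, c (σ (π (π.symm k))) k :=
        (hc.comp_monotone_left hsorted).prod_diag_le_prod_perm (fun _ _ ↦ hc0 _ _)
          (by simp only [coe_univ, Set.subset_univ])
    _ = ∏ k, c (σ k) k := by simp only [Equiv.apply_symm_apply]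

theorem stmt_0_general {R : Type*} [CommRing R] [PartialOrder R] [IsOrderedRing R] {m K : ℕ}
    (hKm : K ≤ m) {g : Fin m → R} {w : Fin K → R} (hg : Antitone g) (hw : Antitone w)
    (hw0 : ∀ k, 0 ≤ w k) (hgw : ∀ i k, g i * w k ≤ 1) {σ : Fin K → Fin m} (hσ : σ.Injective) :
    1 - ∏ k, (1 - g (σ k) * w k) ≤ 1 - ∏ k, (1 - g (Fin.castLE hKm k) * w k) := by
  have hmono : ∀ k, Monotone fun i ↦ 1 - g i * w k := fun k _ _ hij ↦
    sub_le_sub_left (mul_le_mul_of_nonneg_right (hg hij) (hw0 k)) 1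
  exact sub_le_sub_left ((IsMulMonge.one_sub_mul hg hw).prod_castLE_le_prod_of_injective hKm
    (fun i k ↦ sub_nonneg.2 (hgw i k)) hmono hσ) 1

/-- Lemma 1 of the paper: placing the item with the `k`-th largest attractiveness
at the `k`-th slot maximizes the probability that at least one slot is clicked. -/
theorem stmt_0 (m K : ℕ) (hK : 1 ≤ K) (hKm : K ≤ m)
    (g : Fin m → ℝ) (w : Fin K → ℝ)
    (hg : ∀ i, g i ∈ Set.Icc (0 : ℝ) 1)
    (hw : ∀ k, w k ∈ Set.Icc (0 : ℝ) 1)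
    (hgsorted : ∀ i j : Fin m, i ≤ j → g j ≤ g i)
    (hwsorted : ∀ i j : Fin K, i ≤ j → w j ≤ w i)
    (σ : Fin K → Fin m) (hσ : Function.Injective σ) :
    1 - ∏ k : Fin K, (1 - g (σ k) * w k) ≤
      1 - ∏ k : Fin K, (1 - g (Fin.castLE hKm k) * w k) :=
  stmt_0_general hKm hgsorted hwsorted (fun k ↦ (hw k).1)
    (fun i k ↦ mul_le_one₀ (hg i).2 (hw k).1 (hw k).2) hσ
end

section
/- Let $K \geq 1$, let $x_1 \geq x_2 \geq \dots \geq x_K$ and $y_1 \geq y_2 \geq \dots \geq y_K$ be real numbers in $[0,1]$. Then for every permutation $\sigma$ of $\{1,\dots,K\}$ one has $\prod_{k=1}^{K}\bigl(1 - x_{\sigma(k)} y_k\bigr) \geq \prod_{k=1}^{K}\bigl(1 - x_k y_k\bigr)$. -/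
/-!
Order the indices so that `x` and `y` are both increasing. For `i ≤ m` and `j ≤ m` the binary
rearrangement inequality gives
`(1 - x m * y m) * (1 - x i * y j) ≤ (1 - x i * y m) * (1 - x m * y j)`.
Hence, if `m` is the largest index moved by `σ`, exchanging the values of `σ` at `m` and `σ⁻¹ m`
does not increase the product, as long as all factors are nonnegative. The new permutation fixes
`m`, and iterating leads to the identity.
-/

open Finset

section Exchange

variable {ι R : Type*} [Fintype ι] [CommMonoidWithZero R] [Preorder R] [ZeroLEOneClass R]
  [PosMulMono R]

lemma prod_comp_swap_le_prod [DecidableEq ι] {κ : Type*} {w : κ → ι → R} (hw : ∀ a i, 0 ≤ w a i)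
    {f : ι → κ} {i j : ι} (hij : i ≠ j)
    (h : w (f j) i * w (f i) j ≤ w (f i) i * w (f j) j) :
    ∏ k, w (f (Equiv.swap i j k)) k ≤ ∏ k, w (f k) k := by
  have hrest : ∏ k ∈ {i, j}ᶜ, w (f (Equiv.swap i j k)) k = ∏ k ∈ {i, j}ᶜ, w (f k) k :=
    prod_congr rfl fun k hk => by
      simp only [mem_compl, mem_insert, mem_singleton, not_or] at hk
      rw [Equiv.swap_apply_of_ne_of_ne hk.1 hk.2]
  rw [← prod_compl_mul_prod {i, j}, ← prod_compl_mul_prod {i, j}, hrest, prod_pair hij,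
    prod_pair hij, Equiv.swap_apply_left, Equiv.swap_apply_right]
  exact mul_le_mul_of_nonneg_left h (prod_nonneg fun k _ => hw _ k)

theorem prod_diag_le_prod_perm [LinearOrder ι] {w : ι → ι → R} (hw : ∀ i j, 0 ≤ w i j)
    (hexch : ∀ {i j m}, i ≤ m → j ≤ m → w m m * w i j ≤ w i m * w m j) (σ : Equiv.Perm ι) :
    ∏ k, w k k ≤ ∏ k, w (σ k) k := by
  obtain rfl | hσ := eq_or_ne σ 1
  · simp only [Equiv.Perm.one_apply, le_refl]
  obtain ⟨m, hm, hmax⟩ := σ.support.exists_max_image id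
    (nonempty_iff_ne_empty.2 (Equiv.Perm.support_eq_empty_iff.not.2 hσ))
  have hmσ : σ m ≠ m := Equiv.Perm.mem_support.1 hm
  obtain ⟨l, hlm⟩ := σ.surjective m
  have hne : m ≠ l := by
    rintro rfl
    exact hmσ hlm
  have hσm_le : σ m ≤ m := hmax _ (Equiv.Perm.apply_mem_support.2 hm)
  have hl_le : l ≤ m := hmax _ (Equiv.Perm.apply_mem_support.1 (by rwa [hlm]))
  have hswap : Equiv.swap m (σ m) * σ = σ * Equiv.swap m l := by
    rw [Equiv.mul_swap_eq_swap_mul, hlm, Equiv.swap_comm]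
  calc ∏ k, w k k
    _ ≤ ∏ k, w ((Equiv.swap m (σ m) * σ) k) k := prod_diag_le_prod_perm hw hexch _
    _ = ∏ k, w (σ (Equiv.swap m l k)) k := by simp only [hswap, Equiv.Perm.mul_apply]
    _ ≤ ∏ k, w (σ k) k := prod_comp_swap_le_prod hw hne <| by
      rw [hlm]
      exact hexch hσm_le hl_le
termination_by #σ.support
decreasing_by exact Equiv.Perm.card_support_swap_mul hmσ

end Exchange

lemma one_sub_mul_mul_one_sub_mul_le {R : Type*} [CommRing R] [PartialOrder R] [IsOrderedRing R]
    {a b c d : R} (hab : a ≤ b) (hcd : c ≤ d) :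
    (1 - b * d) * (1 - a * c) ≤ (1 - a * d) * (1 - b * c) := by
  linear_combination mul_add_mul_le_mul_add_mul hab hcd

theorem stmt_1_general {ι R : Type*} [Fintype ι] [CommRing R] [LinearOrder R] [IsOrderedRing R]
    {x y : ι → R} (hxy : Monovary x y) (hle : ∀ i j, x i * y j ≤ 1) (σ : Equiv.Perm ι) :
    ∏ k, (1 - x k * y k) ≤ ∏ k, (1 - x (σ k) * y k) := by
  obtain ⟨_, hx, hy⟩ := hxy.exists_monotone
  exact prod_diag_le_prod_perm (w := fun i j => 1 - x i * y j) (fun i j => sub_nonneg.2 (hle i j))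
    (fun hi hj => one_sub_mul_mul_one_sub_mul_le (hx hi) (hy hj)) σ

/-- The product-form rearrangement inequality inside Lemma 1: among all permutations
pairing two similarly ordered sequences in `[0,1]`, the aligned pairing minimizes
`∏ (1 - x_{σ(k)} y_k)`. -/
theorem stmt_1 (K : ℕ) (hK : 1 ≤ K)
    (x y : Fin K → ℝ)
    (hx : ∀ k, x k ∈ Set.Icc (0 : ℝ) 1)
    (hy : ∀ k, y k ∈ Set.Icc (0 : ℝ) 1)
    (hxsorted : ∀ i j : Fin K, i ≤ j → x j ≤ x i)
    (hysorted : ∀ i j : Fin K, i ≤ j → y j ≤ y i)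
    (σ : Equiv.Perm (Fin K)) :
    ∏ k : Fin K, (1 - x k * y k) ≤ ∏ k : Fin K, (1 - x (σ k) * y k) :=
  stmt_1_general (Antitone.monovary hxsorted hysorted)
    (fun i j => mul_le_one₀ (hx i).2 (hy j).1 (hy j).2) σ
end

section
/- Let $d, T, K \geq 1$ be integers and let $\lambda, \phi' \in \mathbb{R}$ with $1 \leq \phi' \leq \lambda$. For each $t \in \{1,\dots,T\}$ and $k \in \{1,\dots,K\}$ let $x_{t,k} \in \mathbb{R}^d$ with $\|x_{t,k}\|_2 \leq 1$ and let $w_{t,k} \in [0,1]$ satisfy $\sum_{k=1}^{K} w_{t,k}^2 \leq \phi'$ for every $t$. Define the symmetric positive definite matrices $A_0 = \lambda I_d$ and $A_t = A_{t-1} + \sum_{k=1}^{K} w_{t,k}^2\, x_{t,k} x_{t,k}^{\top}$ for $t \geq 1$. Then $\sum_{t=1}^{T} \sum_{k=1}^{K} w_{t,k} \sqrt{x_{t,k}^{\top} A_{t-1}^{-1} x_{t,k}} \leq \sqrt{2 T K d \ln\bigl(1 + \tfrac{\phi' T}{\lambda d}\bigr)}$. -/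
open Finset Matrix Real

/-!
The potential is `log det A_t`. By Sylvester's identity, a positive semidefinite increment `B` of a
positive definite `A` satisfies `det (A + B) = det A * det (1 + C A⁻¹ Cᴴ)` where `B = Cᴴ C`, and
`det (1 + M) ≥ 1 + tr M` for positive semidefinite `M`, so the potential grows by at least
`log (1 + s)` with `s = tr (A⁻¹ B)`. For the design matrices, `A_{t-1} ≥ λ I` and
`tr B ≤ φ' ≤ λ` force `s ≤ 1`, hence `s ≤ 2 log (1 + s)`. The sum telescopes, and AM-GM for the
eigenvalues bounds `det A_T` by `(tr A_T / d) ^ d ≤ (λ + φ' T / d) ^ d`. In round `t` the quantity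
`s` is the weighted sum of the squared confidence widths, so Cauchy-Schwarz over all pairs `(t, k)`
finishes the proof.
-/

theorem one_add_sum_le_prod_one_add {ι R : Type*} [CommSemiring R] [PartialOrder R]
    [IsOrderedRing R] {s : Finset ι} {f : ι → R} (hf : ∀ i ∈ s, 0 ≤ f i) :
    1 + ∑ i ∈ s, f i ≤ ∏ i ∈ s, (1 + f i) := by
  induction s using Finset.cons_induction with
  | empty => simp
  | cons a s ha ih =>
    obtain ⟨hfa, hfs⟩ := Finset.forall_mem_cons ha _ |>.mp hf
    rw [Finset.sum_cons, Finset.prod_cons]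
    calc 1 + (f a + ∑ i ∈ s, f i)
        ≤ 1 + (f a + ∑ i ∈ s, f i) + f a * ∑ i ∈ s, f i :=
          le_add_of_nonneg_right (mul_nonneg hfa (Finset.sum_nonneg hfs))
      _ = (1 + f a) * (1 + ∑ i ∈ s, f i) := by ring
      _ ≤ (1 + f a) * ∏ i ∈ s, (1 + f i) :=
          mul_le_mul_of_nonneg_left (ih hfs) (add_nonneg zero_le_one hfa)

theorem prod_le_sum_div_card_pow {ι : Type*} {s : Finset ι} {f : ι → ℝ}
    (hf : ∀ i ∈ s, 0 ≤ f i) : ∏ i ∈ s, f i ≤ ((∑ i ∈ s, f i) / #s) ^ #s := by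
  obtain rfl | hs := s.eq_empty_or_nonempty
  · simp
  have amgm : (∏ i ∈ s, f i) ^ (#s : ℝ)⁻¹ ≤ (∑ i ∈ s, f i) / #s := by
    simpa using Real.geom_mean_le_arith_mean s (fun _ => 1) f (by simp) (by simpa using hs) hf
  calc ∏ i ∈ s, f i = ((∏ i ∈ s, f i) ^ (#s : ℝ)⁻¹) ^ #s :=
        (Real.rpow_inv_natCast_pow (Finset.prod_nonneg hf) hs.card_ne_zero).symm
    _ ≤ ((∑ i ∈ s, f i) / #s) ^ #s :=
        pow_le_pow_left₀ (Real.rpow_nonneg (Finset.prod_nonneg hf) _) amgm _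

theorem sum_mul_sqrt_le_sqrt_card_mul_sum {ι : Type*} {s : Finset ι} (w : ι → ℝ) {q : ι → ℝ}
    (hq : ∀ i ∈ s, 0 ≤ q i) : ∑ i ∈ s, w i * √(q i) ≤ √(#s * ∑ i ∈ s, w i ^ 2 * q i) := by
  apply Real.le_sqrt_of_sq_le
  calc (∑ i ∈ s, w i * √(q i)) ^ 2 ≤ #s * ∑ i ∈ s, (w i * √(q i)) ^ 2 :=
        sq_sum_le_card_mul_sum_sq
    _ = #s * ∑ i ∈ s, w i ^ 2 * q i := by
        congr 1
        exact Finset.sum_congr rfl fun i hi => by rw [mul_pow, Real.sq_sqrt (hq i hi)]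

theorem sum_sum_mul_sqrt_le_sqrt_card_mul_sum {ι κ : Type*} [Fintype ι] [Fintype κ] (w : ι → κ → ℝ)
    {q : ι → κ → ℝ} (hq : ∀ i k, 0 ≤ q i k) :
    ∑ i, ∑ k, w i k * √(q i k) ≤
      √(Fintype.card ι * Fintype.card κ * ∑ i, ∑ k, w i k ^ 2 * q i k) := by
  simpa [Fintype.sum_prod_type] using sum_mul_sqrt_le_sqrt_card_mul_sum (s := Finset.univ)
    (fun p : ι × κ => w p.1 p.2) fun p _ => hq p.1 p.2

theorem le_two_mul_log_one_add {s : ℝ} (h0 : 0 ≤ s) (h1 : s ≤ 1) : s ≤ 2 * Real.log (1 + s) := by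
  have hlog : 2 * s / (s + 2) ≤ Real.log (1 + s) := Real.le_log_one_add_of_nonneg h0
  have hfrac : s / 2 ≤ 2 * s / (s + 2) := by
    rw [div_le_div_iff₀ two_pos (by linarith)]
    nlinarith
  linarith

section PosSemidef

open scoped ComplexOrder MatrixOrder

variable {n 𝕜 : Type*} [RCLike 𝕜] {A B : Matrix n n 𝕜}

theorem posDef_of_posDef_of_le (hA : A.PosDef) (hAB : A ≤ B) : B.PosDef := by
  simpa using hA.add_posSemidef (Matrix.le_iff.mp hAB)

variable [Fintype n]

theorem trace_mul_nonneg_of_posSemidef (hA : A.PosSemidef) (hB : B.PosSemidef) :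
    0 ≤ (A * B).trace := by
  classical
  obtain ⟨C, rfl⟩ := CStarAlgebra.nonneg_iff_eq_star_mul_self.mp hB.nonneg
  rw [← Matrix.mul_assoc, Matrix.trace_mul_comm, ← Matrix.mul_assoc]
  exact (hA.mul_mul_conjTranspose_same C).trace_nonneg

variable [DecidableEq n]

theorem inv_le_inv_of_posDef_of_le (hA : A.PosDef) (hAB : A ≤ B) : B⁻¹ ≤ A⁻¹ := by
  have hB : B.PosDef := posDef_of_posDef_of_le hA hAB
  have hA_unit : IsUnit A.det := (Matrix.isUnit_iff_isUnit_det A).mp hA.isUnit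
  have hB_unit : IsUnit B.det := (Matrix.isUnit_iff_isUnit_det B).mp hB.isUnit
  have hinv : A⁻¹ - B⁻¹ = (A⁻¹ - B⁻¹)ᴴ * A * (A⁻¹ - B⁻¹) + (B⁻¹)ᴴ * (B - A) * B⁻¹ := by
    rw [Matrix.conjTranspose_sub, hA.inv.isHermitian.eq, hB.inv.isHermitian.eq]
    simp only [Matrix.sub_mul, Matrix.mul_sub, Matrix.mul_assoc, Matrix.mul_nonsing_inv _ hA_unit,
      Matrix.mul_nonsing_inv _ hB_unit, Matrix.nonsing_inv_mul_cancel_left _ _ hA_unit,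
      Matrix.mul_one]
    abel
  rw [Matrix.le_iff, hinv]
  exact (hA.posSemidef.conjTranspose_mul_mul_same _).add
    ((Matrix.le_iff.mp hAB).conjTranspose_mul_mul_same _)

theorem trace_inv_mul_le_of_smul_one_le {c : 𝕜} (hc : 0 < c) (hA : c • 1 ≤ A)
    (hB : B.PosSemidef) : (A⁻¹ * B).trace ≤ c⁻¹ * B.trace := by
  have hinv : A⁻¹ ≤ c⁻¹ • 1 := by
    have hscalar : (c • 1 : Matrix n n 𝕜)⁻¹ = c⁻¹ • 1 := Matrix.inv_eq_right_inv <| by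
      rw [smul_mul_smul_comm, mul_inv_cancel₀ hc.ne', mul_one, one_smul]
    exact hscalar ▸ inv_le_inv_of_posDef_of_le (PosDef.one.smul hc) hA
  simpa [Matrix.sub_mul] using trace_mul_nonneg_of_posSemidef (Matrix.le_iff.mp hinv) hB

theorem one_add_trace_le_det_one_add (hA : A.PosSemidef) : 1 + A.trace ≤ (1 + A).det := by
  have hdet : (1 + A).det = ∏ i, (1 + (hA.1.eigenvalues i : 𝕜)) := by
    conv_lhs => rw [hA.1.spectral_theorem, Unitary.conjStarAlgAut_apply, Matrix.mul_assoc,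
      Matrix.det_one_add_mul_comm, Matrix.mul_assoc]
    simp [← Matrix.diagonal_one, Matrix.diagonal_add]
  rw [hdet, hA.1.trace_eq_sum_eigenvalues]
  exact one_add_sum_le_prod_one_add fun i _ => RCLike.ofReal_nonneg.mpr (hA.eigenvalues_nonneg i)

theorem det_mul_one_add_trace_inv_mul_le_det_add (hA : A.PosDef) (hB : B.PosSemidef) :
    A.det * (1 + (A⁻¹ * B).trace) ≤ (A + B).det := by
  obtain ⟨C, rfl⟩ := CStarAlgebra.nonneg_iff_eq_star_mul_self.mp hB.nonneg
  have htrace : (A⁻¹ * (star C * C)).trace = (C * A⁻¹ * star C).trace := by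
    rw [← Matrix.mul_assoc, Matrix.trace_mul_comm, Matrix.mul_assoc]
  rw [htrace, Matrix.det_add_mul _ _ hA.det_pos.ne'.isUnit]
  exact mul_le_mul_of_nonneg_left
    (one_add_trace_le_det_one_add (hA.inv.posSemidef.mul_mul_conjTranspose_same C)) hA.det_pos.le

theorem det_le_trace_div_card_pow (hA : A.PosSemidef) :
    A.det ≤ (A.trace / Fintype.card n) ^ Fintype.card n := by
  rw [hA.1.det_eq_prod_eigenvalues, hA.1.trace_eq_sum_eigenvalues]
  exact_mod_cast prod_le_sum_div_card_pow fun i _ => hA.eigenvalues_nonneg i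

end PosSemidef

section EllipticalPotential

open scoped MatrixOrder

variable {n : Type*} [Fintype n] {A : ℕ → Matrix n n ℝ} {T : ℕ}

theorem trace_le_trace_zero_add_mul_of_trace_sub_le {c : ℝ}
    (htr : ∀ t < T, (A (t + 1) - A t).trace ≤ c) : (A T).trace ≤ (A 0).trace + c * T := by
  have hsum := Finset.sum_le_card_nsmul (Finset.range T) _ c fun t ht =>
    htr t (Finset.mem_range.mp ht)
  simp only [Matrix.trace_sub, Finset.sum_range_sub fun t => (A t).trace, Finset.card_range,
    nsmul_eq_mul] at hsum
  linarith

variable [DecidableEq n]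

theorem trace_inv_mul_sub_le_two_mul_log_det_sub {A B : Matrix n n ℝ} (hA : A.PosDef)
    (hAB : A ≤ B) (hle : (A⁻¹ * (B - A)).trace ≤ 1) :
    (A⁻¹ * (B - A)).trace ≤ 2 * (Real.log B.det - Real.log A.det) := by
  have hsub : (B - A).PosSemidef := Matrix.le_iff.mp hAB
  have hnonneg : 0 ≤ (A⁻¹ * (B - A)).trace :=
    trace_mul_nonneg_of_posSemidef hA.inv.posSemidef hsub
  have hpos : 0 < 1 + (A⁻¹ * (B - A)).trace := by linarith
  have hdet : A.det * (1 + (A⁻¹ * (B - A)).trace) ≤ B.det := by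
    simpa using det_mul_one_add_trace_inv_mul_le_det_add hA hsub
  have hlog := Real.log_le_log (mul_pos hA.det_pos hpos) hdet
  rw [Real.log_mul hA.det_pos.ne' hpos.ne'] at hlog
  linarith [le_two_mul_log_one_add hnonneg hle]

theorem log_det_le_card_mul_log {A : Matrix n n ℝ} (hA : A.PosDef) {c : ℝ}
    (hc : A.trace / Fintype.card n ≤ c) : Real.log A.det ≤ Fintype.card n * Real.log c := by
  have hmean : 0 ≤ A.trace / Fintype.card n := by
    have := hA.posSemidef.trace_nonneg
    positivity
  rw [← Real.log_pow]
  exact Real.log_le_log hA.det_pos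
    ((det_le_trace_div_card_pow hA.posSemidef).trans (pow_le_pow_left₀ hmean hc _))

theorem sum_trace_inv_mul_sub_le_two_mul_log_det_sub (hA0 : (A 0).PosDef)
    (hmono : MonotoneOn A (Set.Iic T))
    (hle : ∀ t < T, ((A t)⁻¹ * (A (t + 1) - A t)).trace ≤ 1) :
    ∑ t ∈ Finset.range T, ((A t)⁻¹ * (A (t + 1) - A t)).trace ≤
      2 * (Real.log (A T).det - Real.log (A 0).det) := by
  rw [← Finset.sum_range_sub fun t => Real.log (A t).det, Finset.mul_sum]
  refine Finset.sum_le_sum fun t ht => ?_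
  have ht : t < T := Finset.mem_range.mp ht
  have hpos : (A t).PosDef :=
    posDef_of_posDef_of_le hA0 (hmono (Nat.zero_le T) ht.le t.zero_le)
  exact trace_inv_mul_sub_le_two_mul_log_det_sub hpos (hmono ht.le ht t.le_succ) (hle t ht)

theorem sum_trace_inv_mul_sub_le_of_trace_sub_le [Nonempty n] {c φ : ℝ} (hc : 0 < c) (hφ : φ ≤ c)
    (hA0 : A 0 = c • 1) (hmono : MonotoneOn A (Set.Iic T))
    (htr : ∀ t < T, (A (t + 1) - A t).trace ≤ φ) :
    ∑ t ∈ Finset.range T, ((A t)⁻¹ * (A (t + 1) - A t)).trace ≤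
      2 * Fintype.card n * Real.log (1 + φ * T / (c * Fintype.card n)) := by
  have hge : ∀ t ≤ T, c • 1 ≤ A t := fun t ht => hA0 ▸ hmono (Nat.zero_le T) ht t.zero_le
  have hpos0 : (A 0).PosDef := hA0 ▸ PosDef.one.smul hc
  have hposT : (A T).PosDef := posDef_of_posDef_of_le (PosDef.one.smul hc) (hge T le_rfl)
  have hle : ∀ t < T, ((A t)⁻¹ * (A (t + 1) - A t)).trace ≤ 1 := fun t ht =>
    calc ((A t)⁻¹ * (A (t + 1) - A t)).trace ≤ c⁻¹ * (A (t + 1) - A t).trace :=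
          trace_inv_mul_le_of_smul_one_le hc (hge t ht.le)
            (Matrix.le_iff.mp (hmono ht.le ht t.le_succ))
      _ ≤ c⁻¹ * c := by gcongr; exact (htr t ht).trans hφ
      _ = 1 := inv_mul_cancel₀ hc.ne'
  have hcard : (0 : ℝ) < Fintype.card n := by exact_mod_cast Fintype.card_pos
  have hmean : (A T).trace / Fintype.card n ≤ c * (1 + φ * T / (c * Fintype.card n)) := by
    rw [div_le_iff₀ hcard]
    calc (A T).trace ≤ (A 0).trace + φ * T := trace_le_trace_zero_add_mul_of_trace_sub_le htr
      _ = c * (1 + φ * T / (c * Fintype.card n)) * Fintype.card n := by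
        rw [hA0, Matrix.trace_smul, Matrix.trace_one, smul_eq_mul]
        field_simp
  have hfactor : 0 < 1 + φ * T / (c * Fintype.card n) :=
    pos_of_mul_pos_right ((div_pos hposT.trace_pos hcard).trans_le hmean) hc.le
  have hfinal := log_det_le_card_mul_log hposT hmean
  rw [Real.log_mul hc.ne' hfactor.ne'] at hfinal
  have hinit : Real.log (A 0).det = Fintype.card n * Real.log c := by
    rw [hA0, Matrix.det_smul, Matrix.det_one, mul_one, Real.log_pow]
  have hsum := sum_trace_inv_mul_sub_le_two_mul_log_det_sub hpos0 hmono hle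
  linarith

end EllipticalPotential

section WeightedGram

variable {ι κ : Type*} [Fintype κ]

theorem posSemidef_sum_smul_vecMulVec [Finite ι] {a : κ → ℝ} (ha : ∀ k, 0 ≤ a k) (x : κ → ι → ℝ) :
    (∑ k, a k • vecMulVec (x k) (x k)).PosSemidef :=
  posSemidef_sum _ fun k _ => by simpa using (posSemidef_vecMulVec_self_star (x k)).smul (ha k)

variable [Fintype ι]

theorem trace_mul_sum_smul_vecMulVec {R : Type*} [CommSemiring R] (M : Matrix ι ι R) (a : κ → R)
    (x : κ → ι → R) :
    (M * ∑ k, a k • vecMulVec (x k) (x k)).trace = ∑ k, a k * (x k ⬝ᵥ (M *ᵥ x k)) := by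
  simp only [Matrix.mul_sum, Matrix.trace_sum, Matrix.mul_smul, Matrix.trace_smul, smul_eq_mul,
    Matrix.mul_vecMulVec, Matrix.trace_vecMulVec, dotProduct_comm]

theorem trace_sum_smul_vecMulVec_le {a : κ → ℝ} (ha : ∀ k, 0 ≤ a k) {x : κ → ι → ℝ}
    (hx : ∀ k, x k ⬝ᵥ x k ≤ 1) : (∑ k, a k • vecMulVec (x k) (x k)).trace ≤ ∑ k, a k := by
  simp only [Matrix.trace_sum, Matrix.trace_smul, Matrix.trace_vecMulVec, smul_eq_mul]
  exact Finset.sum_le_sum fun k _ => mul_le_of_le_one_right (ha k) (hx k)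

end WeightedGram

open scoped MatrixOrder in
theorem stmt_5_general {ι κ : Type*} [Fintype ι] [DecidableEq ι] [Nonempty ι] [Fintype κ] (T : ℕ)
    {lam phi : ℝ} (hlam0 : 0 < lam) (hlam : phi ≤ lam)
    (x : Fin T → κ → ι → ℝ) (hx : ∀ t k, Real.sqrt (x t k ⬝ᵥ x t k) ≤ 1)
    (w : Fin T → κ → ℝ) (hwsum : ∀ t, ∑ k, w t k ^ 2 ≤ phi)
    (A : ℕ → Matrix ι ι ℝ) (hA0 : A 0 = lam • 1)
    (hAt : ∀ t : Fin T, A (t + 1) = A t + ∑ k, w t k ^ 2 • vecMulVec (x t k) (x t k)) :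
    ∑ t : Fin T, ∑ k, w t k * Real.sqrt (x t k ⬝ᵥ ((A t)⁻¹ *ᵥ x t k)) ≤
      Real.sqrt (2 * T * Fintype.card κ * Fintype.card ι *
        Real.log (1 + phi * T / (lam * Fintype.card ι))) := by
  have hsub : ∀ t : Fin T, A (t + 1) - A t = ∑ k, w t k ^ 2 • vecMulVec (x t k) (x t k) :=
    fun t => by rw [hAt t, add_sub_cancel_left]
  have hmono : MonotoneOn A (Set.Iic T) :=
    monotoneOn_of_le_succ Set.ordConnected_Iic fun t _ _ ht => by
      rw [Nat.succ_eq_succ, Matrix.le_iff, hsub ⟨t, ht⟩]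
      exact posSemidef_sum_smul_vecMulVec (fun k => sq_nonneg _) _
  have htr : ∀ t < T, (A (t + 1) - A t).trace ≤ phi := fun t ht => by
    rw [hsub ⟨t, ht⟩]
    exact (trace_sum_smul_vecMulVec_le (fun k => sq_nonneg _)
      fun k => Real.sqrt_le_one.mp (hx _ k)).trans (hwsum _)
  have hwidth : ∀ (t : Fin T) k, 0 ≤ x t k ⬝ᵥ ((A t)⁻¹ *ᵥ x t k) := fun t k => by
    have hpos : (A t).PosDef := posDef_of_posDef_of_le (hA0 ▸ PosDef.one.smul hlam0)
      (hmono (Nat.zero_le T) t.2.le (Nat.zero_le t))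
    simpa using hpos.inv.posSemidef.dotProduct_mulVec_nonneg (x t k)
  have hpotential := sum_trace_inv_mul_sub_le_of_trace_sub_le hlam0 hlam hA0 hmono htr
  rw [← Fin.sum_univ_eq_sum_range fun t => ((A t)⁻¹ * (A (t + 1) - A t)).trace] at hpotential
  simp only [hsub, trace_mul_sum_smul_vecMulVec] at hpotential
  refine (sum_sum_mul_sqrt_le_sqrt_card_mul_sum w hwidth).trans (Real.sqrt_le_sqrt ?_)
  rw [Fintype.card_fin]
  calc T * Fintype.card κ * ∑ t, ∑ k, w t k ^ 2 * (x t k ⬝ᵥ ((A t)⁻¹ *ᵥ x t k))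
      ≤ T * Fintype.card κ *
          (2 * Fintype.card ι * Real.log (1 + phi * T / (lam * Fintype.card ι))) := by gcongr
    _ = 2 * T * Fintype.card κ * Fintype.card ι *
          Real.log (1 + phi * T / (lam * Fintype.card ι)) := by ring

/-- Lemma 4 of the paper's appendix: the weighted elliptical-potential bound on the
cumulative confidence widths of the UBM-LinUCB algorithm.  Here `A ↑t` (for `t : Fin T`)
is the design matrix `A_{t-1}` available at the beginning of round `t`. -/
theorem stmt_5 (d T K : ℕ) (hd : 1 ≤ d) (hT : 1 ≤ T) (hK : 1 ≤ K)
    (lam phi : ℝ) (hphi : 1 ≤ phi) (hlam : phi ≤ lam)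
    (x : Fin T → Fin K → (Fin d → ℝ))
    (hx : ∀ t k, Real.sqrt (x t k ⬝ᵥ x t k) ≤ 1)
    (w : Fin T → Fin K → ℝ)
    (hw : ∀ t k, w t k ∈ Set.Icc (0 : ℝ) 1)
    (hwsum : ∀ t, ∑ k : Fin K, (w t k) ^ 2 ≤ phi)
    (A : ℕ → Matrix (Fin d) (Fin d) ℝ)
    (hA0 : A 0 = lam • (1 : Matrix (Fin d) (Fin d) ℝ))
    (hAt : ∀ t : Fin T,
      A (t + 1) = A t + ∑ k : Fin K, (w t k) ^ 2 • vecMulVec (x t k) (x t k)) :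
    ∑ t : Fin T, ∑ k : Fin K, w t k * Real.sqrt (x t k ⬝ᵥ ((A t)⁻¹ *ᵥ x t k)) ≤
      Real.sqrt (2 * T * K * d * Real.log (1 + phi * T / (lam * d))) := by
  have : Nonempty (Fin d) := ⟨⟨0, hd⟩⟩
  simpa using stmt_5_general T (by linarith) hlam x hx w hwsum A hA0 hAt
end

section
/- Let $d \geq 1$, let $A$ be a real symmetric positive definite $d \times d$ matrix, let $\theta, \theta^* \in \mathbb{R}^d$, let $\alpha \geq 0$, let $K \geq 1$, and let $\mathcal{D} \subseteq \mathbb{R}^d$ be a finite set with $|\mathcal{D}| \geq K$ such that $|\langle x, \theta^* - \theta\rangle| \leq \alpha \sqrt{x^{\top} A^{-1} x}$ for every $x \in \mathcal{D}$. Let $a_1,\dots,a_K \in \mathcal{D}$ be chosen greedily by the upper confidence index: for each $k$, $a_k$ maximizes $x \mapsto \langle \theta, x\rangle + \alpha\sqrt{x^{\top}A^{-1}x}$ over $\mathcal{D} \setminus \{a_1,\dots,a_{k-1}\}$. Let $a^*_1,\dots,a^*_K \in \mathcal{D}$ be distinct elements with the $K$ largest values of $\langle \theta^*, \cdot\rangle$,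 ordered so that $\langle\theta^*,a^*_1\rangle \geq \dots \geq \langle\theta^*,a^*_K\rangle$ and $\langle\theta^*,a^*_k\rangle \geq \langle\theta^*,x\rangle$ for every $x \in \mathcal{D}\setminus\{a^*_1,\dots,a^*_k\}$. Then for every $k \in \{1,\dots,K\}$: $\langle \theta^*, a^*_k\rangle - \langle \theta^*, a_k\rangle \leq 2\alpha \sqrt{a_k^{\top} A^{-1} a_k}$. -/
open Finset Matrix

/-!
Indexing from `k = 0`, the `k + 1` best arms cannot all be among the `k` arms selected earlier, so
one of them competes at step `k`. Its upper confidence bound dominates the true value of the `k`-th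
best arm and is at most the upper confidence bound of the selected arm, which exceeds that arm's
true value by at most twice its width.
-/

section

variable {ι β R : Type*} [Preorder ι] [LocallyFiniteOrderBot ι]

theorem exists_le_notMem_image_Iio {f : ι → β} (hf : Function.Injective f) (g : ι → β) (k : ι) :
    ∃ m ≤ k, f m ∉ g '' Set.Iio k := by
  classical
  have hcard : #((Iio k).image g) < #((Iic k).image f) :=
    calc
      #((Iio k).image g) ≤ #(Iio k) := card_image_le
      _ < #(Iic k) := card_lt_card (by simp [← coe_ssubset, Set.Iio_ssubset_Iic_self])
      _ = #((Iic k).image f) := (card_image_of_injective _ hf).symm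
  obtain ⟨x, hx_best, hx_selected⟩ := exists_mem_notMem_of_card_lt_card hcard
  obtain ⟨m, hm, rfl⟩ := mem_image.mp hx_best
  exact ⟨m, mem_Iic.mp hm, by simpa using hx_selected⟩

theorem value_le_index_of_isMaxOn_diff_image_Iio [Preorder R] {D : Set β} {value index : β → R}
    (hoptimistic : ∀ x ∈ D, value x ≤ index x) {best selected : ι → β}
    (hbest_mem : ∀ k, best k ∈ D) (hbest_inj : Function.Injective best)
    (hbest_anti : Antitone (value ∘ best)) {k : ι}
    (hgreedy : IsMaxOn index (D \ selected '' Set.Iio k) (selected k)) :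
    value (best k) ≤ index (selected k) := by
  obtain ⟨m, hmk, hm_new⟩ := exists_le_notMem_image_Iio hbest_inj selected k
  calc
    value (best k) ≤ value (best m) := hbest_anti hmk
    _ ≤ index (best m) := hoptimistic _ (hbest_mem m)
    _ ≤ index (selected k) := hgreedy ⟨hbest_mem m, hm_new⟩

theorem stmt_10_general [AddCommGroup R] [LinearOrder R] [IsOrderedAddMonoid R]
    {D : Set β} {value estimate width : β → R}
    (hconf : ∀ x ∈ D, |value x - estimate x| ≤ width x) {best selected : ι → β}
    (hbest_mem : ∀ k, best k ∈ D) (hbest_inj : Function.Injective best)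
    (hbest_anti : Antitone (value ∘ best)) {k : ι} (hselected_mem : selected k ∈ D)
    (hgreedy : IsMaxOn (estimate + width) (D \ selected '' Set.Iio k) (selected k)) :
    value (best k) - value (selected k) ≤ 2 • width (selected k) := by
  have hoptimistic : ∀ x ∈ D, value x ≤ (estimate + width) x := fun x hx ↦
    sub_le_iff_le_add'.mp (abs_sub_le_iff.mp (hconf x hx)).1
  have hestimate : estimate (selected k) - value (selected k) ≤ width (selected k) :=
    (abs_sub_le_iff.mp (hconf _ hselected_mem)).2
  calc
    value (best k) - value (selected k)
        ≤ (estimate + width) (selected k) - value (selected k) :=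
      sub_le_sub_right
        (value_le_index_of_isMaxOn_diff_image_Iio hoptimistic hbest_mem hbest_inj hbest_anti
          hgreedy) _
    _ = (estimate (selected k) - value (selected k)) + width (selected k) :=
      add_sub_right_comm ..
    _ ≤ width (selected k) + width (selected k) := add_le_add_left hestimate _
    _ = 2 • width (selected k) := (two_nsmul _).symm

end

/-- Top-`K` optimism lemma from the proof of Theorem 1: on the confidence event, the gap
between the `k`-th best arm's true value and the `k`-th greedily selected arm's true
value is at most twice the selected arm's confidence width. -/
theorem stmt_10 (d : ℕ) (hd : 1 ≤ d)
    (A : Matrix (Fin d) (Fin d) ℝ) (hA : A.PosDef)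
    (θ θstar : Fin d → ℝ) (α : ℝ) (hα : 0 ≤ α)
    (K : ℕ) (hK : 1 ≤ K)
    (D : Finset (Fin d → ℝ)) (hDcard : K ≤ D.card)
    (hconf : ∀ x ∈ D, |x ⬝ᵥ (θstar - θ)| ≤ α * Real.sqrt (x ⬝ᵥ (A⁻¹ *ᵥ x)))
    -- the greedily selected arms `a 0, …, a (K-1)`
    (a : Fin K → (Fin d → ℝ))
    (haD : ∀ k, a k ∈ D)
    (haInj : Function.Injective a)
    (haGreedy : ∀ k : Fin K, ∀ x ∈ D, (∀ j : Fin K, j < k → a j ≠ x) →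
      θ ⬝ᵥ x + α * Real.sqrt (x ⬝ᵥ (A⁻¹ *ᵥ x)) ≤
        θ ⬝ᵥ (a k) + α * Real.sqrt (a k ⬝ᵥ (A⁻¹ *ᵥ a k)))
    -- the distinct arms `astar 0, …, astar (K-1)` with the `K` largest true values,
    -- ordered decreasingly
    (astar : Fin K → (Fin d → ℝ))
    (hastarD : ∀ k, astar k ∈ D)
    (hastarInj : Function.Injective astar)
    (hastarSorted : ∀ j k : Fin K, j ≤ k → θstar ⬝ᵥ astar k ≤ θstar ⬝ᵥ astar j)
    (hastarTop : ∀ k : Fin K, ∀ x ∈ D, (∀ j : Fin K, j ≤ k → astar j ≠ x) →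
      θstar ⬝ᵥ x ≤ θstar ⬝ᵥ astar k) :
    ∀ k : Fin K,
      θstar ⬝ᵥ astar k - θstar ⬝ᵥ a k ≤ 2 * α * Real.sqrt (a k ⬝ᵥ (A⁻¹ *ᵥ a k)) := by
  intro k
  have hconf_value : ∀ x ∈ (D : Set (Fin d → ℝ)),
      |θstar ⬝ᵥ x - θ ⬝ᵥ x| ≤ α * Real.sqrt (x ⬝ᵥ (A⁻¹ *ᵥ x)) := fun x hx ↦ by
    simpa only [← sub_dotProduct, dotProduct_comm x] using hconf x hx
  simpa only [nsmul_eq_mul, Nat.cast_ofNat, ← mul_assoc] using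
    stmt_10_general hconf_value hastarD hastarInj (fun j k ↦ hastarSorted j k) (haD k)
      (fun x hx ↦ haGreedy k x hx.1 fun j hj hjx ↦ hx.2 ⟨j, hj, hjx⟩)
end

section
/- Let $\mathcal{A}$ be a finite set of arms, $K \geq 1$, and let the set of slates be the injective maps $s \colon \{1,\dots,K\} \to \mathcal{A}$. Let $\pi$ and $\Phi$ be probability mass functions on slates, let $\gamma \colon \mathcal{A} \to \mathbb{R}$, let $w_{k,k'} \geq 0$ for $1 \leq k \leq K$ and $0 \leq k' \leq k-1$, and for each slate $s$ and each $k$ let $q_s(k,\cdot)$ be a probability mass function on $\{0,1,\dots,k-1\}$ (the distribution of the position of the last click before slot $k$). For a pmf $P$ on slates define the marginal $P(a,k,k') = \sum_{s} P(s)\,\mathbf{1}\{s(k)=a\}\, q_s(k,k')$ and $\langle \tilde W, P(a,\cdot,\cdot)\rangle = \sum_{k=1}^{K}\sum_{k'=0}^{k-1} w_{k,k'} P(a,k,k')$. Assume $\langle \tilde W, \pi(a,\cdot,\cdot)\rangle > 0$ for every arm $a$. Then $\sum_{s} \pi(s) \sum_{k=1}^{K}\sum_{k'=0}^{k-1} q_s(k,k')\,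 \gamma(s(k))\, w_{k,k'} \cdot \frac{\langle \tilde W, \Phi(s(k),\cdot,\cdot)\rangle}{\langle \tilde W, \pi(s(k),\cdot,\cdot)\rangle} = \sum_{s} \Phi(s) \sum_{k=1}^{K}\sum_{k'=0}^{k-1} q_s(k,k')\, \gamma(s(k))\, w_{k,k'}$. -/
/-!
A reward `f a * w k k'` that sees the slate only through the displayed arm `a` has expectation
`∑ a, f a * ⟨W̃, P(a,·,·)⟩`, linear in the weighted marginals of the slate distribution `P`.
Reweighting `f` by the ratio of the marginals of `Φ` and `π` therefore replaces those of `π` by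
those of `Φ`. Where the marginal of `π` vanishes the value of the ratio is irrelevant, because it
is multiplied by that marginal.
-/

open Finset

/-- A slate: an injective assignment of arms to the `K` display slots. -/
abbrev Slate (A : Type*) (K : ℕ) := {s : Fin K → A // Function.Injective s}

/-- The UBM-weighted placement marginal `⟨W̃, P(a,·,·)⟩ = ∑_{k,k'} w_{k,k'} P(a,k,k')`,
where `P(a,k,k') = ∑_s P(s) 𝟙{s(k) = a} q_s(k,k')` is the probability under the slate
distribution `P` that arm `a` is displayed at slot `k` with last click before `k` at
position `k'` (slot `k : Fin K` is the `(k+1)`-st slot; `k' : Fin (k+1)` with `k' = 0`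
meaning no previous click). -/
def wdot {A : Type*} [Fintype A] [DecidableEq A] {K : ℕ}
    (w : (k : Fin K) → Fin (k.1 + 1) → ℝ)
    (P : Slate A K → ℝ)
    (q : Slate A K → (k : Fin K) → Fin (k.1 + 1) → ℝ)
    (a : A) : ℝ :=
  ∑ k : Fin K, ∑ k' : Fin (k.1 + 1),
    w k k' * ∑ s : Slate A K, P s * (if s.1 k = a then 1 else 0) * q s k k'

section ExpectedReward

variable {A : Type*} [Fintype A] [DecidableEq A] {K : ℕ}
  (w : (k : Fin K) → Fin (k.1 + 1) → ℝ) (P : Slate A K → ℝ)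
  (q : Slate A K → (k : Fin K) → Fin (k.1 + 1) → ℝ)

/-- The placement marginal `P(a,k,k')`: the probability under the slate distribution `P` that
arm `a` is displayed at slot `k` with last click before `k` at position `k'`, indexed as in
`wdot`. -/
def placementMarginal (a : A) (k : Fin K) (k' : Fin (k.1 + 1)) : ℝ :=
  ∑ s : Slate A K, P s * (if s.1 k = a then 1 else 0) * q s k k'

/-- The expected total reward of a slate drawn from `P`, when displaying arm `a` at slot `k` with
last click at `k'` is worth `f a * w k k'`. Taking `f` to be the attractiveness gives the value of
the policy `P`; taking `f` reweighted gives the expectation of an importance-weighted estimator. -/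
def expectedReward (f : A → ℝ) : ℝ :=
  ∑ s : Slate A K, P s * ∑ k : Fin K, ∑ k' : Fin (k.1 + 1), q s k k' * (f (s.1 k) * w k k')

lemma wdot_eq_sum_placementMarginal (a : A) :
    wdot w P q a = ∑ k, ∑ k', w k k' * placementMarginal P q a k k' :=
  rfl

lemma sum_mul_placementMarginal (f : A → ℝ) (k : Fin K) (k' : Fin (k.1 + 1)) :
    ∑ a, f a * placementMarginal P q a k k' = ∑ s, P s * (q s k k' * f (s.1 k)) := by
  simp only [placementMarginal, mul_sum]
  rw [sum_comm]
  refine sum_congr rfl fun s _ => ?_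
  simp only [mul_ite, ite_mul, mul_one, mul_zero, zero_mul, sum_ite_eq, mem_univ, if_true]
  ring

lemma expectedReward_eq_sum_mul_wdot (f : A → ℝ) :
    expectedReward w P q f = ∑ a, f a * wdot w P q a :=
  calc expectedReward w P q f
      = ∑ k, ∑ k', w k k' * ∑ s, P s * (q s k k' * f (s.1 k)) := by
        simp only [expectedReward, mul_sum]
        rw [sum_comm]
        refine sum_congr rfl fun k _ => ?_
        rw [sum_comm]
        refine sum_congr rfl fun k' _ => sum_congr rfl fun s _ => ?_
        ring
    _ = ∑ k, ∑ k', ∑ a, f a * (w k k' * placementMarginal P q a k k') := by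
        simp only [← sum_mul_placementMarginal, mul_sum, mul_left_comm]
    _ = ∑ a, f a * wdot w P q a := by
        simp only [wdot_eq_sum_placementMarginal, mul_sum]
        rw [sum_comm]
        exact sum_congr rfl fun k _ => sum_comm

theorem stmt_13_general (π Φ : Slate A K → ℝ) (γ : A → ℝ)
    (hsupp : ∀ a, wdot w π q a = 0 → wdot w Φ q a = 0) :
    expectedReward w π q (fun a => γ a * (wdot w Φ q a / wdot w π q a)) =
      expectedReward w Φ q γ := by
  simp only [expectedReward_eq_sum_mul_wdot, mul_assoc]
  exact sum_congr rfl fun a _ => by rw [div_mul_cancel_of_imp (hsupp a)]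

end ExpectedReward

/-- Unbiasedness identity of the UBM-IPS estimator (paper's appendix): the
IPS-weighted expected reward under the logging policy `π` equals the expected
reward under the target policy `Φ`. -/
theorem stmt_13 (A : Type*) [Fintype A] [DecidableEq A] (K : ℕ) (hK : 1 ≤ K)
    (π Φ : Slate A K → ℝ)
    (hπ0 : ∀ s, 0 ≤ π s) (hπ1 : ∑ s : Slate A K, π s = 1)
    (hΦ0 : ∀ s, 0 ≤ Φ s) (hΦ1 : ∑ s : Slate A K, Φ s = 1)
    (γ : A → ℝ)
    (w : (k : Fin K) → Fin (k.1 + 1) → ℝ) (hw : ∀ k k', 0 ≤ w k k')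
    (q : Slate A K → (k : Fin K) → Fin (k.1 + 1) → ℝ)
    (hq0 : ∀ s k k', 0 ≤ q s k k') (hq1 : ∀ s k, ∑ k' : Fin (k.1 + 1), q s k k' = 1)
    (hpos : ∀ a : A, 0 < wdot w π q a) :
    ∑ s : Slate A K, π s * ∑ k : Fin K, ∑ k' : Fin (k.1 + 1),
        q s k k' * (γ (s.1 k) * w k k') * (wdot w Φ q (s.1 k) / wdot w π q (s.1 k)) =
      ∑ s : Slate A K, Φ s * ∑ k : Fin K, ∑ k' : Fin (k.1 + 1),
        q s k k' * (γ (s.1 k) * w k k') := by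
  simpa only [expectedReward, mul_right_comm (γ _), mul_assoc] using
    stmt_13_general w q π Φ γ fun a ha => absurd ha (hpos a).ne'
end
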